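/- The image in PGL(3,ℂ) of the subgroup ⟨σ, φ⟩ ⊆ GL(3,ℂ) under the canonical projection GL(3,ℂ) → PGL(3,ℂ) has order 720, and there exists a group homomorphism ψ : ℤ/2 → Aut(SL(2,5)) such that this image is isomorphic to (SL(2,5) ⋊_ψ ℤ/2) × ℤ/3. -/

import Mathlib

noncomputable section
open Matrix

def zeta5 : ℂ := Complex.exp (2 * Real.pi * Complex.I / 5)

def sqrt5 : ℂ := zeta5 - zeta5 ^ 2 - zeta5 ^ 3 + zeta5 ^ 4

def alpha : Matrix (Fin 2) (Fin 2) ℂ := -(Matrix.of ![![zeta5 ^ 3, 0], ![0, zeta5 ^ 2]])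
def beta : Matrix (Fin 2) (Fin 2) ℂ := Matrix.of ![![0, 1], ![-1, 0]]
def gamma : Matrix (Fin 2) (Fin 2) ℂ :=
  (zeta5 ^ 2 - zeta5 ^ 3)⁻¹ •
    Matrix.of ![![zeta5 + zeta5⁻¹, 1], ![1, -(zeta5 + zeta5⁻¹)]]

/-- The block-diagonal embedding of a `2 × 2` matrix into `GL(3)`, with last diagonal entry 1. -/
def emb (A : Matrix (Fin 2) (Fin 2) ℂ) : Matrix (Fin 3) (Fin 3) ℂ :=
  Matrix.of ![![A 0 0, A 0 1, 0], ![A 1 0, A 1 1, 0], ![0, 0, 1]]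

def alpha' : Matrix (Fin 3) (Fin 3) ℂ := emb alpha
def beta' : Matrix (Fin 3) (Fin 3) ℂ := emb beta
def gamma' : Matrix (Fin 3) (Fin 3) ℂ := emb gamma

def sigma : Matrix (Fin 3) (Fin 3) ℂ :=
  Matrix.of ![![(zeta5 - zeta5 ^ 4) / sqrt5, (zeta5 ^ 3 - zeta5 ^ 2) / sqrt5, 0],
    ![(zeta5 ^ 3 - zeta5 ^ 2) / sqrt5, -((zeta5 - zeta5 ^ 4) / sqrt5), 0],
    ![0, 0, 1]]

def tau : Matrix (Fin 3) (Fin 3) ℂ := Matrix.diagonal ![zeta5, 1, 1]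

def rho : Matrix (Fin 3) (Fin 3) ℂ := Matrix.diagonal ![zeta5 ^ 3, zeta5 ^ 2, 1]

/-- The subgroup of `GL(3, ℂ)` generated by the invertible matrices in `S`. -/
def gen3 (S : Set (Matrix (Fin 3) (Fin 3) ℂ)) : Subgroup (GL (Fin 3) ℂ) :=
  Subgroup.closure {g : GL (Fin 3) ℂ | (g : Matrix (Fin 3) (Fin 3) ℂ) ∈ S}

/-- `S(2,1) = ⟨α', β', γ'⟩`. -/
def S21 : Subgroup (GL (Fin 3) ℂ) := gen3 {alpha', beta', gamma'}

abbrev SL25 := Matrix.SpecialLinearGroup (Fin 2) (ZMod 5)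

/-- The subgroup of nonzero scalar matrices in `GL(3, ℂ)`. -/
def scalarSub : Subgroup (GL (Fin 3) ℂ) :=
  (Units.map (algebraMap ℂ (Matrix (Fin 3) (Fin 3) ℂ)).toMonoidHom).range

instance : scalarSub.Normal := by
  constructor
  rintro n ⟨c, rfl⟩ g
  refine ⟨c, ?_⟩
  ext
  simp only [Units.coe_map, RingHom.toMonoidHom_eq_coe, MonoidHom.coe_coe, Units.val_mul]
  rw [← Algebra.commutes (↑c : ℂ) (↑g : Matrix (Fin 3) (Fin 3) ℂ), mul_assoc,
    ← Units.val_mul, mul_inv_cancel, Units.val_one, mul_one]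

/-- `PGL(3, ℂ)`: the quotient of `GL(3, ℂ)` by the nonzero scalar matrices. -/
abbrev PGL3 := GL (Fin 3) ℂ ⧸ scalarSub

def xi : ℂ := Complex.exp (2 * Real.pi * Complex.I / 60)

/-- `φ = diag(ζ₅, 1, ξ)` with `ξ¹² = ζ₅`. -/
def phi : Matrix (Fin 3) (Fin 3) ℂ := Matrix.diagonal ![zeta5, 1, xi]

/-!
Up to scalars `φ` is `diag (ξ¹¹, ξ⁵⁹, 1)`, so the image in `PGL(3, ℂ)` is isomorphic to a subgroup
of `GL(2, ℂ)`. The `2 × 2` blocks of `σ` and `φ` are `ρ(w)` and `ξ³⁵ ρ(u)`, where `ρ` is the odd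
Weil representation of `SL(2, 5)` and `w`, `u` generate `SL(2, 5)`. Since `ρ(u)` has order `5` and
the scalar `ξ³⁵` has order `12`, the subgroup they generate is `ρ(SL(2, 5)) · μ₁₂`. Here `μ₃` is a
direct factor, because elements of `ρ(SL(2, 5)) · μ₄` have determinant `±1`. The scalar `i` has
determinant `-1`, so it lies outside `ρ(SL(2, 5))`, but `i² = -1 = ρ(-1)`; as `diag (2, 1/2)` also
has square `-1` in `SL(2, 5)`, multiplying `i` by its image under `ρ` gives an involution which
splits off the factor `ℤ/2`.
-/

section InternalProducts

open Subgroup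

variable {G : Type*} [Group G]

theorem zpowers_mul_eq_sup_of_coprime {a b : G} (h : Commute a b)
    (hab : (orderOf a).Coprime (orderOf b)) : zpowers (a * b) = zpowers a ⊔ zpowers b := by
  have left_mem {x y : G} (h : Commute x y) (hxy : (orderOf x).Coprime (orderOf y)) :
      x ∈ zpowers (x * y) := by
    obtain ⟨m, hm⟩ := exists_pow_eq_self_of_coprime hxy.symm
    have hpow : (x * y) ^ orderOf y = x ^ orderOf y := by
      rw [h.mul_pow, pow_orderOf_eq_one, mul_one]
    simpa only [hpow, hm] using pow_mem (npow_mem_zpowers (x * y) (orderOf y)) m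
  refine le_antisymm ?_ (sup_le ?_ ?_) <;> rw [zpowers_le]
  · exact mul_mem_sup (mem_zpowers a) (mem_zpowers b)
  · exact left_mem h hab
  · simpa only [h.eq] using left_mem h.symm hab.symm

theorem disjoint_zpowers_of_prime_orderOf {H : Subgroup G} {t : G} (hp : (orderOf t).Prime)
    (ht : t ∉ H) : Disjoint H (zpowers t) := by
  have : Fact (Nat.card (zpowers t)).Prime := ⟨by rwa [Nat.card_zpowers]⟩
  rcases (H.subgroupOf (zpowers t)).eq_bot_or_eq_top_of_prime_card with h | h
  · exact subgroupOf_eq_bot.mp h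
  · exact absurd (subgroupOf_eq_top.mp h (mem_zpowers t)) ht

theorem nonempty_zpowers_mulEquiv_zmod {t : G} {n : ℕ} (hn : orderOf t = n) :
    Nonempty (zpowers t ≃* Multiplicative (ZMod n)) :=
  ⟨mulEquivOfCyclicCardEq <| by
    rw [Nat.card_zpowers, hn, Nat.card_congr Multiplicative.toAdd, Nat.card_zmod]⟩

theorem nonempty_mulEquiv_prod_of_disjoint {H K : Subgroup G} (hcomm : K ≤ centralizer H)
    (hdisj : Disjoint H K) : Nonempty (↥(H ⊔ K) ≃* H × K) := by
  have hcommute (x : H) (y : K) : Commute (H.subtype x) (K.subtype y) :=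
    mem_centralizer_iff.mp (hcomm y.2) x x.2
  let f : H × K →* G := H.subtype.noncommCoprod K.subtype hcommute
  have hf : Function.Injective f := by
    rw [MonoidHom.noncommCoprod_injective, range_subtype, range_subtype]
    exact ⟨H.subtype_injective, K.subtype_injective, hdisj⟩
  have hrange : f.range = H ⊔ K := by
    rw [MonoidHom.noncommCoprod_range, range_subtype, range_subtype]
  exact ⟨(MulEquiv.subgroupCongr hrange.symm).trans (MonoidHom.ofInjective hf).symm⟩

theorem nonempty_mulEquiv_semidirectProduct_of_disjoint {H K : Subgroup G} (h : K ≤ normalizer H)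
    (hdisj : Disjoint H K) :
    Nonempty (↥(H ⊔ K) ≃* H ⋊[H.normalizerMonoidHom.comp (inclusion h)] K) := by
  let f := SemidirectProduct.monoidHomSubgroup h
  have hf : Function.Injective f := by
    rw [injective_iff_map_eq_one]
    rintro ⟨x, y⟩ hxy
    have hx : (x : G) * y = 1 := hxy
    have hy : y = 1 := Subtype.ext <| disjoint_def.mp hdisj
      (by rw [← inv_eq_of_mul_eq_one_right hx]; exact inv_mem x.2) y.2
    subst hy
    ext <;> simp_all
  have hrange : f.range = H ⊔ K := by
    refine le_antisymm ?_ (sup_le ?_ ?_)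
    · rintro _ ⟨x, rfl⟩
      exact mul_mem_sup x.left.2 x.right.2
    · exact fun x hx ↦ ⟨SemidirectProduct.inl ⟨x, hx⟩, by simp [f]⟩
    · exact fun y hy ↦ ⟨SemidirectProduct.inr ⟨y, hy⟩, by simp [f]⟩
  exact ⟨(MulEquiv.subgroupCongr hrange.symm).trans (MonoidHom.ofInjective hf).symm⟩

theorem exists_mulEquiv_semidirectProduct_of_sq_eq_one {N : Type*} [Group N] {f : N →* G}
    (hf : Function.Injective f) {z : G} {s : N} (hz : z ∈ centralizer (f.range : Set G))
    (hzf : z ∉ f.range) (hsq : (z * f s) ^ 2 = 1) :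
    ∃ ψ : Multiplicative (ZMod 2) →* MulAut N,
      Nonempty (↥(f.range ⊔ zpowers z) ≃* N ⋊[ψ] Multiplicative (ZMod 2)) := by
  -- `z` itself may have square in `f.range` other than `1`; the complement is `⟨z * f s⟩`.
  have hs : f s ∈ f.range := ⟨s, rfl⟩
  have hmem : z * f s ∉ f.range := by rwa [mul_mem_cancel_right hs]
  have hne : z * f s ≠ 1 := fun h ↦ hmem (h ▸ one_mem _)
  have horder : orderOf (z * f s) = 2 := orderOf_eq_prime hsq hne
  have hnorm : zpowers (z * f s) ≤ normalizer f.range :=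
    zpowers_le.mpr <| mul_mem (centralizer_le_normalizer _ hz) (le_normalizer hs)
  have hsup : f.range ⊔ zpowers (z * f s) = f.range ⊔ zpowers z := by
    refine le_antisymm (sup_le le_sup_left ?_) (sup_le le_sup_left ?_) <;> rw [zpowers_le]
    · exact mul_mem (mem_sup_right (mem_zpowers z)) (mem_sup_left hs)
    · exact (mul_mem_cancel_right (mem_sup_left hs)).mp (mem_sup_right (mem_zpowers _))
  obtain ⟨e⟩ := nonempty_mulEquiv_semidirectProduct_of_disjoint hnorm
    (disjoint_zpowers_of_prime_orderOf (horder ▸ Nat.prime_two) hmem)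
  obtain ⟨e₂⟩ := nonempty_zpowers_mulEquiv_zmod horder
  exact ⟨_, ⟨(MulEquiv.subgroupCongr hsup.symm).trans <| e.trans <|
    SemidirectProduct.congr' (MonoidHom.ofInjective hf).symm e₂⟩⟩

end InternalProducts

section Bruhat

open scoped MatrixGroups

/-- The homomorphism `a ↦ diag (a, a⁻¹)` onto the diagonal torus of `SL(2, F)`. -/
def diagSL2 (F : Type*) [Field F] : Fˣ →* SL(2, F) :=
  MonoidHom.mk' (fun a ↦ SpecialLinearGroup.diag2 a a.ne_zero) fun a b ↦ Subtype.ext <| by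
    simp [SpecialLinearGroup.diag2_coe', mul_comm]

/-- The parametrization of the upper unitriangular subgroup of `SL(2, F)`, as an additive
character. -/
def upperSL2 (F : Type*) [Field F] : AddChar F SL(2, F) where
  toFun := SpecialLinearGroup.transvection zero_ne_one
  map_zero_eq_one' := SpecialLinearGroup.transvection_coeff_zero zero_ne_one
  map_add_eq_mul' := SpecialLinearGroup.transvection_add zero_ne_one

/-- The Weyl element of `SL(2, F)`. -/
def weylSL2 (F : Type*) [Field F] : SL(2, F) := ⟨!![0, -1; 1, 0], by simp⟩

variable {F M : Type*} [Field F] [Monoid M]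

@[simp]
theorem coe_diagSL2 (a : Fˣ) :
    (diagSL2 F a : Matrix (Fin 2) (Fin 2) F) = !![(a : F), 0; 0, (a : F)⁻¹] :=
  SpecialLinearGroup.diag2_coe' a.ne_zero

@[simp]
theorem coe_upperSL2 (t : F) :
    (upperSL2 F t : Matrix (Fin 2) (Fin 2) F) = !![1, t; 0, 1] := by
  rw [upperSL2, AddChar.coe_mk, SpecialLinearGroup.transvection_coe]
  ext i j
  fin_cases i <;> fin_cases j <;> simp

@[simp]
theorem coe_weylSL2 : (weylSL2 F : Matrix (Fin 2) (Fin 2) F) = !![0, -1; 1, 0] := rfl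

theorem closure_weylSL2_upperSL2 :
    Submonoid.closure (insert (weylSL2 F) (Set.range (upperSL2 F))) = ⊤ := by
  set S := Submonoid.closure (insert (weylSL2 F) (Set.range (upperSL2 F)))
  have hw : weylSL2 F ∈ S := Submonoid.subset_closure (Set.mem_insert _ _)
  have hu (t : F) : upperSL2 F t ∈ S :=
    Submonoid.subset_closure (Set.mem_insert_of_mem _ ⟨t, rfl⟩)
  refine top_le_iff.mp fun g _ ↦ SL2.transvection_induction (· ∈ S) (fun i j h c ↦ ?_)
    (fun _ _ ↦ mul_mem) g
  obtain ⟨rfl, rfl⟩ | ⟨rfl, rfl⟩ : i = 0 ∧ j = 1 ∨ i = 1 ∧ j = 0 := by omega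
  · exact hu c
  · convert mul_mem (mul_mem hw (hu (-c))) (pow_mem hw 3)
    ext k l
    fin_cases k <;> fin_cases l <;> simp [SpecialLinearGroup.transvection_coe, pow_succ]

theorem closure_weylSL2_upperSL2_one {p : ℕ} [Fact p.Prime] :
    Subgroup.closure {weylSL2 (ZMod p), upperSL2 (ZMod p) 1} = ⊤ := by
  set K := Subgroup.closure {weylSL2 (ZMod p), upperSL2 (ZMod p) 1}
  have hu (t : ZMod p) : upperSL2 (ZMod p) t ∈ K := by
    rw [← ZMod.natCast_zmod_val t, ← nsmul_one, AddChar.map_nsmul_eq_pow]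
    exact pow_mem (Subgroup.subset_closure (Set.mem_insert_of_mem _ (Set.mem_singleton _))) _
  rw [← Subgroup.toSubmonoid_inj, Subgroup.top_toSubmonoid, ← top_le_iff,
    ← closure_weylSL2_upperSL2, Submonoid.closure_le, Set.insert_subset_iff,
    Set.range_subset_iff]
  exact ⟨Subgroup.subset_closure (Set.mem_insert _ _), hu⟩

/-- Candidates in a monoid `M` for the images of the diagonal matrices `diag (a, a⁻¹)`, the upper
unitriangular matrices and the Weyl element under a homomorphism from `SL(2, F)`, subject to
relations which make such a homomorphism exist. -/
structure SL2BruhatData (F M : Type*) [Field F] [Monoid M] where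
  torus : Fˣ →* M
  unip : AddChar F M
  weyl : M
  unip_mul_torus (t : F) (a : Fˣ) : unip t * torus a = torus a * unip (a⁻¹ * a⁻¹ * t)
  weyl_mul_weyl : weyl * weyl = torus (-1)
  weyl_mul_unip_mul_weyl (t : Fˣ) :
    weyl * unip t * weyl = unip (-t⁻¹) * weyl * torus t * unip (-t⁻¹)

/-- Parameters for the elements of `SL(2, F)` in the Bruhat decomposition: `triangular a t` stands
for `diag (a, a⁻¹) * u t` and `big s c t` for `u s * w * diag (c, c⁻¹) * u t`, where `u` denotes
upper unitriangular matrices and `w` the Weyl element. -/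
inductive SL2BruhatCell (F : Type*) [Field F]
  | triangular (a : Fˣ) (t : F)
  | big (s : F) (c : Fˣ) (t : F)

namespace SL2BruhatCell

/-- The decomposition of the set of Bruhat coordinates into its two cells. -/
def equivSum (F : Type*) [Field F] : SL2BruhatCell F ≃ (Fˣ × F) ⊕ (F × Fˣ × F) where
  toFun
    | triangular a t => .inl (a, t)
    | big s c t => .inr (s, c, t)
  invFun
    | .inl (a, t) => triangular a t
    | .inr (s, c, t) => big s c t
  left_inv x := by cases x <;> rfl
  right_inv x := by cases x <;> rfl

/-- Left multiplication by `u r` in Bruhat coordinates. -/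
def unipMul (r : F) : SL2BruhatCell F → SL2BruhatCell F
  | triangular a t => triangular a (a⁻¹ * a⁻¹ * r + t)
  | big s c t => big (r + s) c t

open Classical in
/-- Left multiplication by the Weyl element in Bruhat coordinates. -/
def weylMul : SL2BruhatCell F → SL2BruhatCell F
  | triangular a t => big 0 a t
  | big s c t =>
    if hs : s = 0 then triangular (-1 * c) t
    else big (-s⁻¹) (Units.mk0 s hs * c) (c⁻¹ * c⁻¹ * (-s⁻¹) + t)

end SL2BruhatCell

namespace SL2BruhatData

open SL2BruhatCell

/-- The element of `M` with given Bruhat coordinates. -/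
def word (D : SL2BruhatData F M) : SL2BruhatCell F → M
  | triangular a t => D.torus a * D.unip t
  | big s c t => D.unip s * D.weyl * D.torus c * D.unip t

theorem word_unipMul (D : SL2BruhatData F M) (r : F) (x : SL2BruhatCell F) :
    D.word (x.unipMul r) = D.unip r * D.word x := by
  cases x with
  | triangular a t =>
    rw [unipMul, word, word, AddChar.map_add_eq_mul, ← mul_assoc, ← D.unip_mul_torus, mul_assoc]
  | big s c t => simp only [unipMul, word, AddChar.map_add_eq_mul, mul_assoc]

theorem word_weylMul (D : SL2BruhatData F M) (x : SL2BruhatCell F) :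
    D.word x.weylMul = D.weyl * D.word x := by
  rcases x with ⟨a, t⟩ | ⟨s, c, t⟩
  · simp only [weylMul, word, AddChar.map_zero_eq_one, one_mul, mul_assoc]
  by_cases hs : s = 0
  · subst hs
    rw [weylMul, dif_pos rfl, word, word, map_mul, ← D.weyl_mul_weyl, AddChar.map_zero_eq_one,
      one_mul]
    simp only [mul_assoc]
  have hrel : D.weyl * D.unip s * D.weyl =
      D.unip (-s⁻¹) * D.weyl * D.torus (Units.mk0 s hs) * D.unip (-s⁻¹) :=
    D.weyl_mul_unip_mul_weyl (Units.mk0 s hs)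
  calc D.word (weylMul (big s c t))
      = D.unip (-s⁻¹) * D.weyl * D.torus (Units.mk0 s hs) *
          (D.torus c * D.unip (c⁻¹ * c⁻¹ * (-s⁻¹))) * D.unip t := by
        simp only [weylMul, dif_neg hs, word, map_mul, AddChar.map_add_eq_mul, mul_assoc]
    _ = D.weyl * D.unip s * D.weyl * (D.torus c * D.unip t) := by
        rw [← D.unip_mul_torus, hrel]
        simp only [mul_assoc]
    _ = D.weyl * D.word (big s c t) := by simp only [word, mul_assoc]

/-- The group `SL(2, F)` itself. -/
def standard (F : Type*) [Field F] : SL2BruhatData F SL(2, F) where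
  torus := diagSL2 F
  unip := upperSL2 F
  weyl := weylSL2 F
  unip_mul_torus t a := Subtype.ext <| by simp; field_simp
  weyl_mul_weyl := Subtype.ext <| by simp
  weyl_mul_unip_mul_weyl t := Subtype.ext <| by simp

theorem coe_standard_word_triangular (a : Fˣ) (t : F) :
    ((standard F).word (triangular a t) : Matrix (Fin 2) (Fin 2) F) =
      !![(a : F), a * t; 0, (a : F)⁻¹] := by
  simp [word, standard]

theorem coe_standard_word_big (s : F) (c : Fˣ) (t : F) :
    ((standard F).word (big s c t) : Matrix (Fin 2) (Fin 2) F) =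
      !![s * c, s * c * t - (c : F)⁻¹; (c : F), c * t] := by
  simp [word, standard]
  ring

theorem standard_word_injective : Function.Injective (standard F).word := by
  intro x y hxy
  have h (i j : Fin 2) := congrArg (fun g : SL(2, F) ↦ g i j) hxy
  rcases x with ⟨a, t⟩ | ⟨s, c, t⟩ <;> rcases y with ⟨a', t'⟩ | ⟨s', c', t'⟩ <;>
    simp only [coe_standard_word_triangular, coe_standard_word_big] at h
  · obtain rfl : a = a' := Units.ext (h 0 0)
    obtain rfl : t = t' := mul_left_cancel₀ a.ne_zero (h 0 1)
    rfl
  · exact absurd (h 1 0).symm c'.ne_zero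
  · exact absurd (h 1 0) c.ne_zero
  · obtain rfl : c = c' := Units.ext (h 1 0)
    obtain rfl : t = t' := mul_left_cancel₀ c.ne_zero (h 1 1)
    obtain rfl : s = s' := mul_right_cancel₀ c.ne_zero (h 0 0)
    rfl

theorem standard_word_surjective : Function.Surjective (standard F).word := by
  intro g
  have hdet : g 0 0 * g 1 1 - g 0 1 * g 1 0 = 1 := by
    rw [← Matrix.det_fin_two, g.det_coe]
  by_cases hc : g 1 0 = 0
  · rw [hc, mul_zero, sub_zero] at hdet
    have ha : g 0 0 ≠ 0 := left_ne_zero_of_mul_eq_one hdet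
    refine ⟨triangular (Units.mk0 (g 0 0) ha) ((g 0 0)⁻¹ * g 0 1), Subtype.ext ?_⟩
    rw [coe_standard_word_triangular, Units.val_mk0, mul_inv_cancel_left₀ ha,
      ← eq_inv_of_mul_eq_one_right hdet, ← hc]
    exact (Matrix.eta_fin_two _).symm
  · refine ⟨big (g 0 0 / g 1 0) (Units.mk0 (g 1 0) hc) (g 1 1 / g 1 0), Subtype.ext ?_⟩
    have hb : g 0 0 * (g 1 1 / g 1 0) - (g 1 0)⁻¹ = g 0 1 := by
      field_simp
      linear_combination hdet
    rw [coe_standard_word_big, Units.val_mk0, div_mul_cancel₀ _ hc, mul_div_cancel₀ _ hc, hb]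
    exact (Matrix.eta_fin_two _).symm

/-- The Bruhat decomposition of `SL(2, F)`. -/
def bruhatEquiv (F : Type*) [Field F] : SL2BruhatCell F ≃ SL(2, F) :=
  Equiv.ofBijective (standard F).word ⟨standard_word_injective, standard_word_surjective⟩

theorem bruhatEquiv_triangular (a : Fˣ) (t : F) :
    bruhatEquiv F (triangular a t) = diagSL2 F a * upperSL2 F t := rfl

theorem bruhatEquiv_unipMul (r : F) (x : SL2BruhatCell F) :
    bruhatEquiv F (x.unipMul r) = upperSL2 F r * bruhatEquiv F x :=
  (standard F).word_unipMul r x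

theorem bruhatEquiv_weylMul (x : SL2BruhatCell F) :
    bruhatEquiv F x.weylMul = weylSL2 F * bruhatEquiv F x :=
  (standard F).word_weylMul x

/-- The map underlying `SL2BruhatData.lift`. -/
def liftFun (D : SL2BruhatData F M) (g : SL(2, F)) : M :=
  D.word ((bruhatEquiv F).symm g)

theorem liftFun_diagSL2_mul_upperSL2 (D : SL2BruhatData F M) (a : Fˣ) (t : F) :
    D.liftFun (diagSL2 F a * upperSL2 F t) = D.torus a * D.unip t := by
  rw [← bruhatEquiv_triangular, liftFun, Equiv.symm_apply_apply, word]

theorem liftFun_one (D : SL2BruhatData F M) : D.liftFun 1 = 1 := by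
  simpa only [map_one, AddChar.map_zero_eq_one, mul_one] using
    D.liftFun_diagSL2_mul_upperSL2 (1 : Fˣ) (0 : F)

theorem liftFun_upperSL2_mul (D : SL2BruhatData F M) (r : F) (g : SL(2, F)) :
    D.liftFun (upperSL2 F r * g) = D.unip r * D.liftFun g := by
  obtain ⟨x, rfl⟩ := (bruhatEquiv F).surjective g
  rw [← bruhatEquiv_unipMul, liftFun, liftFun, Equiv.symm_apply_apply, Equiv.symm_apply_apply,
    word_unipMul]

theorem liftFun_weylSL2_mul (D : SL2BruhatData F M) (g : SL(2, F)) :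
    D.liftFun (weylSL2 F * g) = D.weyl * D.liftFun g := by
  obtain ⟨x, rfl⟩ := (bruhatEquiv F).surjective g
  rw [← bruhatEquiv_weylMul, liftFun, liftFun, Equiv.symm_apply_apply, Equiv.symm_apply_apply,
    word_weylMul]

theorem liftFun_upperSL2 (D : SL2BruhatData F M) (t : F) :
    D.liftFun (upperSL2 F t) = D.unip t := by
  simpa only [liftFun_one, mul_one] using D.liftFun_upperSL2_mul t 1

theorem liftFun_weylSL2 (D : SL2BruhatData F M) : D.liftFun (weylSL2 F) = D.weyl := by
  simpa only [liftFun_one, mul_one] using D.liftFun_weylSL2_mul 1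

theorem liftFun_mul (D : SL2BruhatData F M) (g h : SL(2, F)) :
    D.liftFun (g * h) = D.liftFun g * D.liftFun h := by
  have hg : g ∈ Submonoid.closure (insert (weylSL2 F) (Set.range (upperSL2 F))) :=
    closure_weylSL2_upperSL2 (F := F) ▸ Submonoid.mem_top g
  induction hg using Submonoid.closure_induction generalizing h with
  | mem x hx =>
    rcases hx with rfl | ⟨t, rfl⟩
    · rw [liftFun_weylSL2_mul, liftFun_weylSL2]
    · rw [liftFun_upperSL2_mul, liftFun_upperSL2]
  | one => rw [one_mul, liftFun_one, one_mul]
  | mul x y _ _ ihx ihy => rw [mul_assoc, ihx, ihy, ihx y, mul_assoc]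

/-- The homomorphism from `SL(2, F)` with prescribed values on the diagonal matrices, the upper
unitriangular matrices and the Weyl element. -/
def lift (D : SL2BruhatData F M) : SL(2, F) →* M where
  toFun := D.liftFun
  map_one' := D.liftFun_one
  map_mul' := D.liftFun_mul

@[simp]
theorem lift_upperSL2 (D : SL2BruhatData F M) (t : F) : D.lift (upperSL2 F t) = D.unip t :=
  D.liftFun_upperSL2 t

@[simp]
theorem lift_weylSL2 (D : SL2BruhatData F M) : D.lift (weylSL2 F) = D.weyl :=
  D.liftFun_weylSL2

@[simp]
theorem lift_diagSL2 (D : SL2BruhatData F M) (a : Fˣ) : D.lift (diagSL2 F a) = D.torus a := by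
  change D.liftFun (diagSL2 F a) = D.torus a
  simpa only [AddChar.map_zero_eq_one, mul_one] using D.liftFun_diagSL2_mul_upperSL2 a 0

theorem lift_bruhatEquiv (D : SL2BruhatData F M) (x : SL2BruhatCell F) :
    D.lift (bruhatEquiv F x) = D.word x :=
  congrArg D.word ((bruhatEquiv F).symm_apply_apply x)

theorem lift_injective {D : SL2BruhatData F M}
    (htriangular : ∀ a t, D.torus a * D.unip t = 1 → a = 1 ∧ t = 0)
    (hbig : ∀ c t, D.weyl * D.torus c ≠ D.unip t) : Function.Injective D.lift := by
  rw [injective_iff_map_eq_one]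
  intro g hg
  obtain ⟨⟨a, t⟩ | ⟨s, c, t⟩, rfl⟩ := (bruhatEquiv F).surjective g
  · obtain ⟨rfl, rfl⟩ := htriangular a t (by rwa [lift_bruhatEquiv, word] at hg)
    rw [bruhatEquiv_triangular, map_one, AddChar.map_zero_eq_one, one_mul]
  · refine absurd ?_ (hbig c (-s + -t))
    calc D.weyl * D.torus c
        = D.unip (-s) * D.word (big s c t) * D.unip (-t) := by
          have hs : D.unip (-s) * D.unip s = 1 := by
            rw [← AddChar.map_add_eq_mul, neg_add_cancel, AddChar.map_zero_eq_one]
          have ht : D.unip t * D.unip (-t) = 1 := by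
            rw [← AddChar.map_add_eq_mul, add_neg_cancel, AddChar.map_zero_eq_one]
          simp only [word, mul_assoc, ht, mul_one]
          rw [← mul_assoc, hs, one_mul]
      _ = D.unip (-s + -t) := by
          rw [← lift_bruhatEquiv, hg, mul_one, ← AddChar.map_add_eq_mul]

end SL2BruhatData

theorem natCard_SL2 [Finite F] :
    Nat.card SL(2, F) = (Nat.card F - 1) * Nat.card F * (Nat.card F + 1) := by
  rw [← Nat.card_congr (SL2BruhatData.bruhatEquiv F), Nat.card_congr (SL2BruhatCell.equivSum F),
    Nat.card_sum, Nat.card_prod, Nat.card_prod, Nat.card_prod, Nat.card_units]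
  ring

theorem map_SL2_eq_one_of_commGroup {A : Type*} [CommGroup A] (hF : ∃ a : F, a ≠ 0 ∧ a ^ 2 ≠ 1)
    (f : SL(2, F) →* A) (g : SL(2, F)) : f g = 1 := by
  obtain ⟨a, ha, ha'⟩ := hF
  exact Abelianization.commutator_subset_ker f
    (SL2.commutator_eq_top ha ha' ▸ Subgroup.mem_top g)

end Bruhat

section OddWeilRepresentation

instance fact_prime_five : Fact (Nat.Prime 5) := ⟨Nat.prime_five⟩

theorem isPrimitiveRoot_zeta5 : IsPrimitiveRoot zeta5 5 := by
  simpa [zeta5] using Complex.isPrimitiveRoot_exp 5 (by norm_num)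

theorem zeta5_pow_five : zeta5 ^ 5 = 1 := isPrimitiveRoot_zeta5.pow_eq_one

theorem zeta5_cyclotomic : zeta5 ^ 4 + zeta5 ^ 3 + zeta5 ^ 2 + zeta5 + 1 = 0 := by
  have h := isPrimitiveRoot_zeta5.geom_sum_eq_zero (by norm_num)
  simp only [Finset.sum_range_succ, Finset.sum_range_zero] at h
  linear_combination h

theorem sqrt5_sq : sqrt5 ^ 2 = 5 := by
  grind [sqrt5, zeta5_pow_five, zeta5_cyclotomic]

theorem sqrt5_ne_zero : sqrt5 ≠ 0 := by
  rw [← pow_ne_zero_iff two_ne_zero, sqrt5_sq]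
  norm_num

/-- The additive character `t ↦ ζ₅ ^ t` of `𝔽₅`. -/
def zeta5Char : AddChar (ZMod 5) ℂ := AddChar.zmodChar 5 zeta5_pow_five

theorem zeta5Char_apply (t : ZMod 5) : zeta5Char t = zeta5 ^ t.val := rfl

theorem zeta5Char_eq_one_iff {t : ZMod 5} : zeta5Char t = 1 ↔ t = 0 := by
  rw [zeta5Char_apply, isPrimitiveRoot_zeta5.pow_eq_one_iff_dvd, ← ZMod.natCast_eq_zero_iff,
    ZMod.natCast_zmod_val]

theorem zeta5Char_ne_neg_one (t : ZMod 5) : zeta5Char t ≠ -1 := by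
  intro h
  have h5 : zeta5Char t ^ 5 = 1 := by
    rw [zeta5Char_apply, pow_right_comm, zeta5_pow_five, one_pow]
  norm_num [h] at h5

/-- Representatives of the nonzero elements of `𝔽₅` up to sign. An odd function `f` on `𝔽₅` is
identified with the vector of its values at these two points. -/
def oddPoint : Fin 2 → ZMod 5 := ![1, 3]

/-- The action `f ↦ (a / 5) f (a ·)` of `𝔽₅ˣ` on the odd functions on `𝔽₅`. -/
def oddWeilTorus : (ZMod 5)ˣ →* Matrix (Fin 2) (Fin 2) ℤ where
  toFun a := Matrix.of fun i j ↦ quadraticChar (ZMod 5) a *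
    if a * oddPoint i = oddPoint j then 1 else if a * oddPoint i = -oddPoint j then -1 else 0
  map_one' := by decide
  map_mul' := by decide +kernel

/-- Multiplication of odd functions on `𝔽₅` by the Gaussian functions `x ↦ ζ₅ ^ (3 t x²)`. -/
def oddWeilUnip : AddChar (ZMod 5) (Matrix (Fin 2) (Fin 2) ℂ) where
  toFun t := Matrix.diagonal fun i ↦ zeta5Char (3 * t * oddPoint i ^ 2)
  map_zero_eq_one' := by simp
  map_add_eq_mul' s t := by
    simp [mul_add, add_mul, AddChar.map_add_eq_mul]

theorem oddWeilUnip_apply (t : ZMod 5) :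
    oddWeilUnip t = Matrix.diagonal fun i ↦ zeta5Char (3 * t * oddPoint i ^ 2) := rfl

/-- The Fourier transform on the odd functions on `𝔽₅`, normalized by `√5`. -/
def oddWeilWeyl : Matrix (Fin 2) (Fin 2) ℂ :=
  !![(zeta5 - zeta5 ^ 4) / sqrt5, (zeta5 ^ 3 - zeta5 ^ 2) / sqrt5;
    (zeta5 ^ 3 - zeta5 ^ 2) / sqrt5, -((zeta5 - zeta5 ^ 4) / sqrt5)]

theorem sq_oddPoint_of_oddWeilTorus_ne_zero {a : (ZMod 5)ˣ} {i j : Fin 2}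
    (h : oddWeilTorus a i j ≠ 0) : oddPoint i ^ 2 = a⁻¹ * a⁻¹ * oddPoint j ^ 2 := by
  have hsq : (a * oddPoint i) ^ 2 = oddPoint j ^ 2 := by
    rw [sq_eq_sq_iff_eq_or_eq_neg]
    by_contra! hne
    exact h (by simp [oddWeilTorus, hne.1, hne.2])
  rw [← hsq, mul_pow, sq (a : ZMod 5)]
  simp only [mul_assoc, Units.inv_mul_cancel_left]

theorem oddWeilUnip_mul_oddWeilTorus (t : ZMod 5) (a : (ZMod 5)ˣ) :
    oddWeilUnip t * (oddWeilTorus a).map (Int.castRingHom ℂ) =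
      (oddWeilTorus a).map (Int.castRingHom ℂ) * oddWeilUnip (a⁻¹ * a⁻¹ * t) := by
  ext i j
  rw [oddWeilUnip_apply, oddWeilUnip_apply, Matrix.diagonal_mul, Matrix.mul_diagonal,
    Matrix.map_apply, mul_comm]
  by_cases h : oddWeilTorus a i j = 0
  · rw [h, map_zero, zero_mul, zero_mul]
  · rw [sq_oddPoint_of_oddWeilTorus_ne_zero h]
    ring_nf

theorem oddWeilWeyl_eq : oddWeilWeyl = (5 : ℂ)⁻¹ •
    !![zeta5 + 2 * zeta5 ^ 2 - 2 * zeta5 ^ 3 - zeta5 ^ 4,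
        -2 * zeta5 + zeta5 ^ 2 - zeta5 ^ 3 + 2 * zeta5 ^ 4;
      -2 * zeta5 + zeta5 ^ 2 - zeta5 ^ 3 + 2 * zeta5 ^ 4,
        -(zeta5 + 2 * zeta5 ^ 2 - 2 * zeta5 ^ 3 - zeta5 ^ 4)] := by
  have hinv : sqrt5⁻¹ = sqrt5 / 5 := by
    rw [← sqrt5_sq, sq, div_self_mul_self']
  ext i j
  fin_cases i <;> fin_cases j <;> simp [oddWeilWeyl, div_eq_mul_inv, hinv] <;>
    grind [sqrt5, zeta5_pow_five]

theorem oddWeilWeyl_mul_oddWeilWeyl : oddWeilWeyl * oddWeilWeyl = -1 := by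
  ext i j
  fin_cases i <;> fin_cases j <;> simp [oddWeilWeyl_eq] <;>
    grind [zeta5_pow_five, zeta5_cyclotomic]

theorem oddWeilUnip_eq (t : ZMod 5) :
    oddWeilUnip t = !![zeta5 ^ (3 * t).val, 0; 0, zeta5 ^ (2 * t).val] := by
  have hpoint : 3 * t * 3 ^ 2 = 2 * t := by grind
  rw [oddWeilUnip_apply, Matrix.diagonal_fin_two]
  simp [oddPoint, zeta5Char_apply, hpoint]

theorem oddWeilTorus_cases : ∀ t : (ZMod 5)ˣ,
    (t.val = 1 ∧ -t⁻¹.val = 4 ∧ oddWeilTorus t = !![1, 0; 0, 1]) ∨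
    (t.val = 2 ∧ -t⁻¹.val = 2 ∧ oddWeilTorus t = !![0, 1; -1, 0]) ∨
    (t.val = 3 ∧ -t⁻¹.val = 3 ∧ oddWeilTorus t = !![0, -1; 1, 0]) ∨
    (t.val = 4 ∧ -t⁻¹.val = 1 ∧ oddWeilTorus t = !![-1, 0; 0, -1]) := by
  decide +kernel

theorem oddWeilWeyl_mul_oddWeilUnip_mul_oddWeilWeyl (t : (ZMod 5)ˣ) :
    oddWeilWeyl * oddWeilUnip t * oddWeilWeyl =
      oddWeilUnip (-t⁻¹) * oddWeilWeyl * (oddWeilTorus t).map (Int.castRingHom ℂ) *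
        oddWeilUnip (-t⁻¹) := by
  have unip₁ : oddWeilUnip 1 = !![zeta5 ^ 3, 0; 0, zeta5 ^ 2] := oddWeilUnip_eq 1
  have unip₂ : oddWeilUnip 2 = !![zeta5 ^ 1, 0; 0, zeta5 ^ 4] := oddWeilUnip_eq 2
  have unip₃ : oddWeilUnip 3 = !![zeta5 ^ 4, 0; 0, zeta5 ^ 1] := oddWeilUnip_eq 3
  have unip₄ : oddWeilUnip 4 = !![zeta5 ^ 2, 0; 0, zeta5 ^ 3] := oddWeilUnip_eq 4
  rcases oddWeilTorus_cases t with ⟨ht, ht', h⟩ | ⟨ht, ht', h⟩ | ⟨ht, ht', h⟩ | ⟨ht, ht', h⟩ <;>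
    rw [ht, ht', h] <;> clear ht ht' h <;> ext i j <;> fin_cases i <;> fin_cases j <;>
    simp only [Matrix.mul_apply, Fin.sum_univ_two, Matrix.map_apply, oddWeilWeyl_eq,
      unip₁, unip₂, unip₃, unip₄] <;> simp <;>
    grind [zeta5_pow_five, zeta5_cyclotomic]

theorem oddWeilWeyl_apply_ne_zero (i j : Fin 2) : oddWeilWeyl i j ≠ 0 := by
  have hne (k l : ℕ) (hk : k < 5) (hl : l < 5) (hkl : k ≠ l) : zeta5 ^ k - zeta5 ^ l ≠ 0 :=
    sub_ne_zero.mpr fun h ↦ hkl (isPrimitiveRoot_zeta5.pow_inj hk hl h)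
  have h₁₄ : zeta5 - zeta5 ^ 4 ≠ 0 := by
    simpa only [pow_one] using hne 1 4 (by simp) (by simp) (by simp)
  have h₃₂ : zeta5 ^ 3 - zeta5 ^ 2 ≠ 0 := hne 3 2 (by simp) (by simp) (by simp)
  have A := div_ne_zero h₁₄ sqrt5_ne_zero
  have B := div_ne_zero h₃₂ sqrt5_ne_zero
  fin_cases i <;> fin_cases j
  exacts [A, B, B, neg_ne_zero.mpr A]

theorem map_oddWeilTorus_neg_one : (oddWeilTorus (-1)).map (Int.castRingHom ℂ) = -1 := by
  have h : oddWeilTorus (-1) = -1 := by decide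
  rw [h, ← RingHom.mapMatrix_apply, map_neg, map_one]

/-- The action of `SL(2, 5)` on the odd functions on `𝔽₅`, on the three kinds of generators. -/
def oddWeilData : SL2BruhatData (ZMod 5) (Matrix (Fin 2) (Fin 2) ℂ) where
  torus := (Int.castRingHom ℂ).mapMatrix.toMonoidHom.comp oddWeilTorus
  unip := oddWeilUnip
  weyl := oddWeilWeyl
  unip_mul_torus := oddWeilUnip_mul_oddWeilTorus
  weyl_mul_weyl := oddWeilWeyl_mul_oddWeilWeyl.trans map_oddWeilTorus_neg_one.symm
  weyl_mul_unip_mul_weyl := oddWeilWeyl_mul_oddWeilUnip_mul_oddWeilWeyl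

theorem oddWeilData_torus_mul_unip_eq_one {a : (ZMod 5)ˣ} {t : ZMod 5}
    (h : oddWeilData.torus a * oddWeilData.unip t = 1) : a = 1 ∧ t = 0 := by
  have h₀ : (oddWeilTorus a 0 0 : ℂ) * zeta5Char (3 * t) = 1 := by
    simpa [oddWeilData, oddWeilUnip_apply, oddPoint] using congr($h 0 0)
  rcases oddWeilTorus_cases a with ⟨ha, -, hT⟩ | ⟨-, -, hT⟩ | ⟨-, -, hT⟩ | ⟨-, -, hT⟩ <;>
    simp [hT, neg_eq_iff_eq_neg, zeta5Char_eq_one_iff, zeta5Char_ne_neg_one] at h₀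
  exact ⟨Units.ext ha, h₀.resolve_left (by decide)⟩

theorem oddWeilData_weyl_mul_torus_ne_unip (c : (ZMod 5)ˣ) (t : ZMod 5) :
    oddWeilData.weyl * oddWeilData.torus c ≠ oddWeilData.unip t := by
  intro h
  have h₀ : oddWeilWeyl 0 0 * oddWeilTorus c 0 1 + oddWeilWeyl 0 1 * oddWeilTorus c 1 1 = 0 := by
    simpa [oddWeilData, oddWeilUnip_apply, Matrix.mul_apply] using congr($h 0 1)
  rcases oddWeilTorus_cases c with ⟨-, -, hT⟩ | ⟨-, -, hT⟩ | ⟨-, -, hT⟩ | ⟨-, -, hT⟩ <;>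
    simp [hT, oddWeilWeyl_apply_ne_zero] at h₀

/-- The odd part of the Weil representation of `SL(2, 5)`. -/
def oddWeilRep : SL25 →* GL (Fin 2) ℂ := oddWeilData.lift.toHomUnits

theorem oddWeilRep_injective : Function.Injective oddWeilRep := by
  refine .of_comp (f := Units.val) ?_
  exact SL2BruhatData.lift_injective (fun _ _ ↦ oddWeilData_torus_mul_unip_eq_one)
    oddWeilData_weyl_mul_torus_ne_unip

theorem coe_oddWeilRep_weylSL2 :
    (oddWeilRep (weylSL2 (ZMod 5)) : Matrix (Fin 2) (Fin 2) ℂ) = oddWeilWeyl :=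
  oddWeilData.lift_weylSL2

theorem coe_oddWeilRep_upperSL2_one :
    (oddWeilRep (upperSL2 (ZMod 5) 1) : Matrix (Fin 2) (Fin 2) ℂ) =
      !![zeta5 ^ 3, 0; 0, zeta5 ^ 2] :=
  (oddWeilData.lift_upperSL2 1).trans (oddWeilUnip_eq 1)

theorem oddWeilRep_diagSL2_neg_one : oddWeilRep (diagSL2 (ZMod 5) (-1)) = -1 :=
  Units.ext <| (oddWeilData.lift_diagSL2 (-1)).trans map_oddWeilTorus_neg_one

theorem det_oddWeilRep (g : SL25) : Matrix.GeneralLinearGroup.det (oddWeilRep g) = 1 :=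
  map_SL2_eq_one_of_commGroup ⟨2, by decide, by decide⟩
    (Matrix.GeneralLinearGroup.det.comp oddWeilRep) g

end OddWeilRepresentation

section Generators

open Subgroup Matrix.GeneralLinearGroup

theorem isPrimitiveRoot_xi : IsPrimitiveRoot xi 60 := by
  simpa [xi] using Complex.isPrimitiveRoot_exp 60 (by norm_num)

theorem xi_pow_twelve : xi ^ 12 = zeta5 := by
  rw [xi, zeta5, ← Complex.exp_nat_mul]
  congr 1
  push_cast
  ring

/-- The number `ξ` as a unit of `ℂ`. -/
def xiUnit : ℂˣ := Units.mk0 xi (isPrimitiveRoot_xi.ne_zero (by norm_num))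

theorem isPrimitiveRoot_xiUnit : IsPrimitiveRoot xiUnit 60 :=
  IsPrimitiveRoot.coe_units_iff.mp isPrimitiveRoot_xi

theorem xiUnit_pow_thirty : xiUnit ^ 30 = -1 :=
  Units.ext <| (isPrimitiveRoot_xi.pow (by norm_num)
    (by norm_num : 60 = 30 * 2)).eq_neg_one_of_two_right

/-- The scalar matrix `ξ` in `GL(2, ℂ)`. -/
def xiScalar : GL (Fin 2) ℂ := scalar (Fin 2) xiUnit

theorem coe_xiScalar_pow (n : ℕ) :
    ((xiScalar ^ n : GL (Fin 2) ℂ) : Matrix (Fin 2) (Fin 2) ℂ) =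
      Matrix.scalar (Fin 2) (xi ^ n) := by
  rw [map_pow]
  rfl

theorem commute_xiScalar_pow (n : ℕ) (A : GL (Fin 2) ℂ) : Commute (xiScalar ^ n) A :=
  Commute.pow_left (scalar_commute xiUnit A) n

theorem det_xiScalar_pow (n : ℕ) :
    Matrix.GeneralLinearGroup.det (xiScalar ^ n) = xiUnit ^ (2 * n) := by
  rw [map_pow, xiScalar, det_scalar, Fintype.card_fin, ← pow_mul]

theorem orderOf_xiScalar : orderOf xiScalar = 60 := by
  have hscalar : Function.Injective (scalar (Fin 2) : ℂˣ →* GL (Fin 2) ℂ) := fun u v h ↦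
    Units.ext <| Matrix.scalar_inj.mp congr($(h).val)
  rw [xiScalar, orderOf_injective _ hscalar, isPrimitiveRoot_xiUnit.eq_orderOf]

theorem orderOf_xiScalar_pow {m n : ℕ} (h : m * n = 60) : orderOf (xiScalar ^ m) = n := by
  have hm : m ≠ 0 := by rintro rfl; omega
  rw [orderOf_pow_of_dvd hm (orderOf_xiScalar ▸ Dvd.intro n h), orderOf_xiScalar, ← h,
    Nat.mul_div_cancel_left n (Nat.pos_of_ne_zero hm)]

/-- The generator `φ`, rescaled so that it becomes the block matrix `diag (A, 1)` for this `A`. -/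
def phiBlock : GL (Fin 2) ℂ := oddWeilRep (upperSL2 (ZMod 5) 1) * (xiScalar ^ 15 * xiScalar ^ 20)

theorem coe_phiBlock : (phiBlock : Matrix (Fin 2) (Fin 2) ℂ) = !![xi ^ 11, 0; 0, xi ^ 59] := by
  have h : xi ^ 60 = 1 := isPrimitiveRoot_xi.pow_eq_one
  rw [phiBlock, ← pow_add, Units.val_mul, coe_oddWeilRep_upperSL2_one, coe_xiScalar_pow,
    ← xi_pow_twelve]
  ext i j
  fin_cases i <;> fin_cases j <;> simp <;> grind

theorem zpowers_phiBlock : zpowers phiBlock =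
    zpowers (oddWeilRep (upperSL2 (ZMod 5) 1)) ⊔ zpowers (xiScalar ^ 15) ⊔
      zpowers (xiScalar ^ 20) := by
  have h15 : orderOf (xiScalar ^ 15) = 4 := orderOf_xiScalar_pow (by norm_num)
  have h20 : orderOf (xiScalar ^ 20) = 3 := orderOf_xiScalar_pow (by norm_num)
  have h35 : orderOf (xiScalar ^ 35) = 12 := by
    rw [orderOf_pow' _ (by norm_num), orderOf_xiScalar]
    norm_num
  have hcop : (orderOf (xiScalar ^ 15)).Coprime (orderOf (xiScalar ^ 20)) := by
    rw [h15, h20]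
    norm_num
  have hunip : orderOf (upperSL2 (ZMod 5) 1) ∣ 5 := by
    rw [orderOf_dvd_iff_pow_eq_one, ← AddChar.map_nsmul_eq_pow]
    exact (upperSL2 (ZMod 5)).map_zero_eq_one
  rw [phiBlock, zpowers_mul_eq_sup_of_coprime, zpowers_mul_eq_sup_of_coprime _ hcop, sup_assoc]
  · exact commute_xiScalar_pow _ _
  · rw [← pow_add]
    exact (commute_xiScalar_pow _ _).symm
  · rw [← pow_add, orderOf_injective _ oddWeilRep_injective, h35]
    exact Nat.Coprime.coprime_dvd_left hunip (by norm_num)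

/-- The group generated by the image of the odd Weil representation and the twelfth roots of unity,
which are written as products of fourth and third roots of unity. -/
def oddWeilMul12 : Subgroup (GL (Fin 2) ℂ) :=
  oddWeilRep.range ⊔ zpowers (xiScalar ^ 15) ⊔ zpowers (xiScalar ^ 20)

theorem closure_oddWeilRep_weylSL2_phiBlock :
    Subgroup.closure {oddWeilRep (weylSL2 (ZMod 5)), phiBlock} = oddWeilMul12 := by
  have closure_pair (A B : GL (Fin 2) ℂ) :
      Subgroup.closure {A, B} = zpowers A ⊔ zpowers B := by
    rw [Set.insert_eq, Subgroup.closure_union, ← zpowers_eq_closure, ← zpowers_eq_closure]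
  have hrange : oddWeilRep.range = zpowers (oddWeilRep (weylSL2 (ZMod 5))) ⊔
      zpowers (oddWeilRep (upperSL2 (ZMod 5) 1)) := by
    rw [MonoidHom.range_eq_map, ← closure_weylSL2_upperSL2_one, MonoidHom.map_closure,
      Set.image_pair, closure_pair]
  rw [closure_pair, zpowers_phiBlock, oddWeilMul12, hrange]
  simp only [sup_assoc]

theorem exists_mulEquiv_oddWeilRep_range_sup :
    ∃ ψ : Multiplicative (ZMod 2) →* MulAut SL25,
      Nonempty (↥(oddWeilRep.range ⊔ zpowers (xiScalar ^ 15)) ≃*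
        SL25 ⋊[ψ] Multiplicative (ZMod 2)) := by
  refine exists_mulEquiv_semidirectProduct_of_sq_eq_one oddWeilRep_injective
    (s := diagSL2 (ZMod 5) (Units.mk0 2 (by decide))) ?_ ?_ ?_
  · exact mem_centralizer_iff.mpr fun A _ ↦ (commute_xiScalar_pow 15 A).symm.eq
  · rintro ⟨g, hg⟩
    have hdet := congrArg Matrix.GeneralLinearGroup.det hg
    rw [det_oddWeilRep, det_xiScalar_pow, xiUnit_pow_thirty] at hdet
    norm_num [Units.ext_iff] at hdet
  · have hsq : (Units.mk0 2 (by decide) : (ZMod 5)ˣ) ^ 2 = -1 := by decide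
    have hxi : (xiScalar ^ 15) ^ 2 = -1 := by
      rw [← pow_mul, xiScalar, ← map_pow, xiUnit_pow_thirty]
      refine Units.ext ?_
      change Matrix.scalar (Fin 2) (-1 : ℂ) = -1
      rw [map_neg, map_one]
    rw [(commute_xiScalar_pow 15 _).mul_pow, hxi, ← map_pow, ← map_pow, hsq,
      oddWeilRep_diagSL2_neg_one, neg_mul_neg, one_mul]

theorem xiScalar_pow_twenty_notMem :
    xiScalar ^ 20 ∉ oddWeilRep.range ⊔ zpowers (xiScalar ^ 15) := by
  have hdet : oddWeilRep.range ⊔ zpowers (xiScalar ^ 15) ≤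
      ((powMonoidHom 2).comp Matrix.GeneralLinearGroup.det).ker := by
    refine sup_le ?_ (zpowers_le.mpr ?_)
    · rintro _ ⟨g, rfl⟩
      rw [MonoidHom.mem_ker, MonoidHom.comp_apply, det_oddWeilRep, map_one]
    · rw [MonoidHom.mem_ker, MonoidHom.comp_apply, det_xiScalar_pow, xiUnit_pow_thirty,
        powMonoidHom_apply, neg_one_sq]
  intro h
  have h80 : xiUnit ^ (2 * 20 * 2) = 1 := by
    rw [pow_mul, ← det_xiScalar_pow]
    exact hdet h
  rw [isPrimitiveRoot_xiUnit.pow_eq_one_iff_dvd] at h80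
  norm_num at h80

theorem exists_mulEquiv_oddWeilMul12 :
    ∃ ψ : Multiplicative (ZMod 2) →* MulAut SL25,
      Nonempty (oddWeilMul12 ≃*
        (SL25 ⋊[ψ] Multiplicative (ZMod 2)) × Multiplicative (ZMod 3)) := by
  have horder : orderOf (xiScalar ^ 20) = 3 := orderOf_xiScalar_pow (by norm_num)
  have hcentral : zpowers (xiScalar ^ 20) ≤
      centralizer (oddWeilRep.range ⊔ zpowers (xiScalar ^ 15) : Subgroup (GL (Fin 2) ℂ)) :=
    zpowers_le.mpr <| mem_centralizer_iff.mpr fun A _ ↦ (commute_xiScalar_pow 20 A).symm.eq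
  obtain ⟨ψ, ⟨e⟩⟩ := exists_mulEquiv_oddWeilRep_range_sup
  obtain ⟨e₃⟩ := nonempty_zpowers_mulEquiv_zmod horder
  obtain ⟨e'⟩ := nonempty_mulEquiv_prod_of_disjoint hcentral <|
    disjoint_zpowers_of_prime_orderOf (horder ▸ Nat.prime_three) xiScalar_pow_twenty_notMem
  exact ⟨ψ, ⟨e'.trans (e.prodCongr e₃)⟩⟩

end Generators

section ProjectiveImage

/-- The block embedding `emb` as a monoid homomorphism. -/
def embHom : Matrix (Fin 2) (Fin 2) ℂ →* Matrix (Fin 3) (Fin 3) ℂ where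
  toFun := emb
  map_one' := by
    ext i j
    fin_cases i <;> fin_cases j <;> simp [emb]
  map_mul' A B := by
    ext i j
    fin_cases i <;> fin_cases j <;>
      simp [emb, Matrix.mul_apply, Fin.sum_univ_two, Fin.sum_univ_three]

theorem emb_injective : Function.Injective emb := by
  intro A B h
  ext i j
  have hij := congr($h i.castSucc j.castSucc)
  fin_cases i <;> fin_cases j <;> simpa [emb] using hij

/-- The homomorphism `A ↦ [diag (A, 1)]` from `GL(2, ℂ)` to `PGL(3, ℂ)`. -/
def blockToPGL3 : GL (Fin 2) ℂ →* PGL3 := (QuotientGroup.mk' scalarSub).comp (Units.map embHom)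

theorem blockToPGL3_injective : Function.Injective blockToPGL3 := by
  rw [injective_iff_map_eq_one]
  intro A hA
  obtain ⟨c, hc⟩ : Units.map embHom A ∈ scalarSub := (QuotientGroup.eq_one_iff _).mp hA
  have hc : Matrix.scalar (Fin 3) (c : ℂ) = emb A := congrArg Units.val hc
  have hc1 : (c : ℂ) = 1 := by simpa [emb] using congr($hc 2 2)
  refine Units.ext (emb_injective ?_)
  rw [← hc, hc1, map_one]
  exact embHom.map_one.symm

theorem sigma_eq_emb : sigma = emb oddWeilWeyl := rfl

theorem phi_eq_scalar_mul_emb :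
    phi = Matrix.scalar (Fin 3) xi * emb !![xi ^ 11, 0; 0, xi ^ 59] := by
  have h11 : xi * xi ^ 11 = zeta5 := by rw [← pow_succ', xi_pow_twelve]
  have h59 : xi * xi ^ 59 = 1 := by rw [← pow_succ', isPrimitiveRoot_xi.pow_eq_one]
  ext i j
  fin_cases i <;> fin_cases j <;> simp [emb, phi, h11, h59]

theorem map_mk_gen3_sigma_phi :
    (gen3 {sigma, phi}).map (QuotientGroup.mk' scalarSub) = oddWeilMul12.map blockToPGL3 := by
  set A : GL (Fin 3) ℂ := Units.map embHom (oddWeilRep (weylSL2 (ZMod 5)))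
  set B : GL (Fin 3) ℂ := Units.map embHom phiBlock
  set s : GL (Fin 3) ℂ := Matrix.GeneralLinearGroup.scalar (Fin 3) xiUnit
  have hsigma : (A : Matrix (Fin 3) (Fin 3) ℂ) = sigma := by
    rw [sigma_eq_emb, ← coe_oddWeilRep_weylSL2]
    rfl
  have hphi : ((s * B : GL (Fin 3) ℂ) : Matrix (Fin 3) (Fin 3) ℂ) = phi := by
    rw [phi_eq_scalar_mul_emb, ← coe_phiBlock]
    rfl
  have hs : QuotientGroup.mk' scalarSub s = 1 := (QuotientGroup.eq_one_iff s).mpr ⟨xiUnit, rfl⟩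
  have hgen : {g : GL (Fin 3) ℂ | (g : Matrix (Fin 3) (Fin 3) ℂ) ∈ ({sigma, phi} : Set _)} =
      {A, s * B} := by
    ext g
    simp only [Set.mem_ofPred_eq, Set.mem_insert_iff, Set.mem_singleton_iff, ← hsigma, ← hphi,
      Units.val_inj]
  rw [gen3, hgen, ← closure_oddWeilRep_weylSL2_phiBlock, MonoidHom.map_closure,
    MonoidHom.map_closure, Set.image_pair, Set.image_pair, map_mul, hs, one_mul]
  rfl

end ProjectiveImage

theorem stmt18 :
    Nat.card ((gen3 {sigma, phi}).map (QuotientGroup.mk' scalarSub)) = 720 ∧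
    ∃ ψ : Multiplicative (ZMod 2) →* MulAut SL25,
      Nonempty ((gen3 {sigma, phi}).map (QuotientGroup.mk' scalarSub) ≃*
        (SL25 ⋊[ψ] Multiplicative (ZMod 2)) × Multiplicative (ZMod 3)) := by
  obtain ⟨ψ, ⟨e⟩⟩ := exists_mulEquiv_oddWeilMul12
  have eimage := (MulEquiv.subgroupCongr map_mk_gen3_sigma_phi).trans <|
    (oddWeilMul12.equivMapOfInjective blockToPGL3 blockToPGL3_injective).symm.trans e
  refine ⟨?_, ψ, ⟨eimage⟩⟩
  have hcard (n : ℕ) : Nat.card (Multiplicative (ZMod n)) = n := Nat.card_zmod n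
  rw [Nat.card_congr eimage.toEquiv, Nat.card_prod, SemidirectProduct.card, natCard_SL2, hcard,
    hcard, Nat.card_zmod]
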